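/- Suppose X ∈ Cl(p,q) satisfies the system of 2ⁿ commutator equations e^A X − X e^A = Q^A for all ordered multi-indices A ⊆ {1,…,n}, where the Q^A ∈ Cl(p,q) are given. Then X = −(1/2ⁿ) Σ_A Q^A (e^A)^{-1} + Z for some Z in the center of Cl(p,q); in particular any two solutions of the system differ by a central element. -/

import Mathlib

/-!
Let `F Y = ∑_A e^A Y (e^A)⁻¹`. Since `Q^A = e^A X − X e^A`, we have
`∑_A Q^A (e^A)⁻¹ = F X − 2ⁿ X`, so the claimed formula holds with `Z = 2⁻ⁿ F X`, and it remains to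
see that `F X` is central. For a generator `e^b`, the product `e^b e^A` is a real multiple of
`e^{A ∆ {b}}` (`gen_mul_eB`), hence `e^b (e^A X (e^A)⁻¹) = (e^{A ∆ {b}} X (e^{A ∆ {b}})⁻¹) e^b`.
Summing over `A` and reindexing along the involution `A ↦ A ∆ {b}` shows that `F X` commutes with
every generator, hence with the whole algebra (`commute_of_commute_gen`).
For uniqueness, the difference of two solutions commutes with each `e^{b}` and so is central.
-/


open CliffordAlgebra

/-- Diagonal metric with `p` entries `+1` and `q` entries `-1`. -/
noncomputable def eta (p q : ℕ) : Fin (p + q) → ℝ :=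
  fun a => if (a : ℕ) < p then 1 else -1

/-- The quadratic form of signature `(p, q)` on `ℝⁿ`, `n = p + q`. -/
noncomputable def Qpq (p q : ℕ) : QuadraticForm ℝ (Fin (p + q) → ℝ) :=
  QuadraticMap.weightedSumSquares ℝ (eta p q)

/-- The real Clifford algebra `Cl(p, q)`. -/
noncomputable abbrev Cl (p q : ℕ) : Type :=
  CliffordAlgebra (Qpq p q)

/-- The generator `e^a` of `Cl(p, q)`. -/
noncomputable def gen (p q : ℕ) (a : Fin (p + q)) : Cl p q :=
  CliffordAlgebra.ι (Qpq p q) (Pi.single a 1)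

/-- The basis element `e^A`: the product of the generators `e^a`, `a ∈ A`,
taken in increasing order (`e^∅ = 1`). -/
noncomputable def eB (p q : ℕ) (A : Finset (Fin (p + q))) : Cl p q :=
  ((A.sort (· ≤ ·)).map (gen p q)).prod

theorem Qpq_single (p q : ℕ) (a : Fin (p + q)) : Qpq p q (Pi.single a 1) = eta p q a := by
  simp [Qpq, QuadraticMap.weightedSumSquares_apply, Pi.single_apply]

theorem eta_mul_self (p q : ℕ) (a : Fin (p + q)) : eta p q a * eta p q a = 1 := by
  unfold eta; split_ifs <;> norm_num

theorem gen_mul_self (p q : ℕ) (a : Fin (p + q)) :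
    gen p q a * gen p q a = algebraMap ℝ (Cl p q) (eta p q a) := by
  rw [gen, ι_sq_scalar, Qpq_single]

theorem gen_anticomm (p q : ℕ) {a b : Fin (p + q)} (h : a ≠ b) :
    gen p q a * gen p q b = -(gen p q b * gen p q a) := by
  refine ι_mul_ι_comm_of_isOrtho ?_
  rw [QuadraticMap.isOrtho_def, Qpq_single, Qpq_single]
  simp only [Qpq, QuadraticMap.weightedSumSquares_apply, Pi.add_apply, smul_eq_mul]
  -- the coordinates `i = a` and `i = b` are distinct, so no cross terms survive
  have : ∀ i, eta p q i * (((Pi.single a 1 : Fin (p + q) → ℝ) i + (Pi.single b 1 : _ → ℝ) i) *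
      ((Pi.single a 1 : Fin (p + q) → ℝ) i + (Pi.single b 1 : _ → ℝ) i)) =
      (if i = a then eta p q i else 0) + (if i = b then eta p q i else 0) := by
    intro i
    by_cases h1 : i = a
    · subst h1; simp [h]
    · by_cases h2 : i = b
      · subst h2; simp [h1]
      · simp [h1, h2]
  simp [this, Finset.sum_add_distrib]

theorem isUnit_gen (p q : ℕ) (a : Fin (p + q)) : IsUnit (gen p q a) := by
  have h : gen p q a * (eta p q a • gen p q a) = 1 := by
    rw [mul_smul_comm, gen_mul_self, Algebra.algebraMap_eq_smul_one, smul_smul, eta_mul_self,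
      one_smul]
  have h' : (eta p q a • gen p q a) * gen p q a = 1 := by
    rw [smul_mul_assoc, ← mul_smul_comm, h]
  exact ⟨⟨_, _, h, h'⟩, rfl⟩

theorem isUnit_eB (p q : ℕ) (A : Finset (Fin (p + q))) : IsUnit (eB p q A) := by
  unfold eB
  generalize A.sort (· ≤ ·) = l
  induction l with
  | nil => simp
  | cons a l ih => simpa using (isUnit_gen p q a).mul ih

/-- Reordering a product of generators only changes it by a scalar, since the generators pairwise
commute or anticommute. -/
theorem perm_prod (p q : ℕ) {l₁ l₂ : List (Fin (p + q))} (h : l₁.Perm l₂) :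
    ∃ r : ℝ, (l₁.map (gen p q)).prod = r • (l₂.map (gen p q)).prod := by
  induction h with
  | nil => exact ⟨1, by simp⟩
  | cons a _ ih =>
    obtain ⟨r, hr⟩ := ih
    exact ⟨r, by simp [hr]⟩
  | swap a b l =>
    by_cases hab : b = a
    · subst hab; exact ⟨1, by simp⟩
    · refine ⟨-1, ?_⟩
      simp only [List.map_cons, List.prod_cons, ← mul_assoc]
      rw [gen_anticomm p q hab]
      simp
  | trans _ _ ih₁ ih₂ =>
    obtain ⟨r, hr⟩ := ih₁
    obtain ⟨s, hs⟩ := ih₂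
    exact ⟨r * s, by rw [hr, hs, smul_smul]⟩

/-- Left multiplication by a generator permutes the basis elements up to scalars. -/
theorem gen_mul_eB (p q : ℕ) (b : Fin (p + q)) (A : Finset (Fin (p + q))) :
    ∃ r : ℝ, gen p q b * eB p q A = r • eB p q (symmDiff A {b}) := by
  by_cases hb : b ∈ A
  · have hs : symmDiff A {b} = A.erase b := by
      ext x; by_cases hx : x = b <;> simp [Finset.mem_symmDiff, hx, hb]
    have hp : (A.sort (· ≤ ·)).Perm (b :: (A.erase b).sort (· ≤ ·)) := by
      rw [List.perm_ext_iff_of_nodup (Finset.sort_nodup _ _)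
        (List.nodup_cons.2 ⟨by simp, Finset.sort_nodup _ _⟩)]
      intro x; by_cases hx : x = b <;> simp [hx, hb]
    obtain ⟨r, hr⟩ := perm_prod p q hp
    refine ⟨r * eta p q b, ?_⟩
    rw [hs, eB, hr, List.map_cons, List.prod_cons, mul_smul_comm, ← mul_assoc, gen_mul_self,
      ← Algebra.smul_def, smul_smul, eB]
  · have hp : (b :: A.sort (· ≤ ·)).Perm ((symmDiff A {b}).sort (· ≤ ·)) := by
      rw [List.perm_ext_iff_of_nodup
        (List.nodup_cons.2 ⟨by simpa using hb, Finset.sort_nodup _ _⟩) (Finset.sort_nodup _ _)]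
      intro x; by_cases hx : x = b <;> simp [Finset.mem_symmDiff, hx, hb]
    simpa [eB] using perm_prod p q hp

theorem commute_of_commute_gen (p q : ℕ) (Z : Cl p q)
    (h : ∀ b, gen p q b * Z = Z * gen p q b) (V : Cl p q) : Z * V = V * Z := by
  induction V using CliffordAlgebra.induction with
  | algebraMap r => exact (Algebra.commutes r Z).symm
  | ι m =>
    have hm : ι (Qpq p q) m = ∑ b, m b • gen p q b := by
      conv_lhs => rw [pi_eq_sum_univ' m]
      rw [map_sum]
      refine Finset.sum_congr rfl fun b _ => ?_
      rw [map_smul, gen]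
    rw [hm, Finset.mul_sum, Finset.sum_mul]
    exact Finset.sum_congr rfl fun b _ => by rw [mul_smul_comm, smul_mul_assoc, h]
  | mul a b ha hb => rw [← mul_assoc, ha, mul_assoc, hb, mul_assoc]
  | add a b ha hb => rw [mul_add, add_mul, ha, hb]

/-- Moving a generator across `e^A X (e^A)⁻¹` replaces `A` by `A ∆ {b}`. -/
theorem gen_mul_conj (p q : ℕ) (X : Cl p q) (b : Fin (p + q)) (A : Finset (Fin (p + q))) :
    gen p q b * (eB p q A * X * Ring.inverse (eB p q A)) =
      eB p q (symmDiff A {b}) * X * Ring.inverse (eB p q (symmDiff A {b})) * gen p q b := by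
  obtain ⟨r, hr⟩ := gen_mul_eB p q b A
  have hinv : Ring.inverse (eB p q (symmDiff A {b})) * gen p q b =
      r • Ring.inverse (eB p q A) := by
    calc _ = Ring.inverse (eB p q (symmDiff A {b})) * (gen p q b * eB p q A) *
          Ring.inverse (eB p q A) := by
          rw [← mul_assoc, mul_assoc _ (eB p q A), Ring.mul_inverse_cancel _ (isUnit_eB p q A),
            mul_one]
      _ = _ := by
          rw [hr, mul_smul_comm, Ring.inverse_mul_cancel _ (isUnit_eB p q _), smul_mul_assoc,
            one_mul]
  rw [mul_assoc _ _ (gen p q b), hinv, ← mul_assoc, ← mul_assoc, hr]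
  simp

/-- The sum of the conjugates of `X` by the basis elements is central, as moving a generator
across the sum reindexes it by the involution `A ↦ A ∆ {b}`. -/
theorem sum_conj_central (p q : ℕ) (X V : Cl p q) :
    (∑ A, eB p q A * X * Ring.inverse (eB p q A)) * V =
      V * ∑ A, eB p q A * X * Ring.inverse (eB p q A) := by
  refine commute_of_commute_gen p q _ (fun b => ?_) V
  rw [Finset.mul_sum, Finset.sum_mul]
  rw [Finset.sum_congr rfl fun A _ => gen_mul_conj p q X b A]
  have hinv : Function.Involutive fun A : Finset (Fin (p + q)) => symmDiff A {b} :=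
    fun A => symmDiff_symmDiff_cancel_right _ _
  exact Equiv.sum_comp hinv.toPerm
    fun A => eB p q A * X * Ring.inverse (eB p q A) * gen p q b

/-- If `X` solves the system of commutator equations `e^A X − X e^A = Q^A` for all
multi-indices `A`, then `X = −2⁻ⁿ Σ_A Q^A (e^A)⁻¹ + Z` for some central `Z`; in
particular any two solutions differ by a central element. -/
theorem commutator_system_solution (p q : ℕ) (hn : 1 ≤ p + q)
    (Q : Finset (Fin (p + q)) → Cl p q) (X : Cl p q)
    (hX : ∀ A, eB p q A * X - X * eB p q A = Q A) :
    (∃ Z : Cl p q, (∀ V : Cl p q, Z * V = V * Z) ∧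
      X = -(((2 : ℝ) ^ (p + q))⁻¹ •
        ∑ A : Finset (Fin (p + q)), Q A * Ring.inverse (eB p q A)) + Z) ∧
    (∀ X' : Cl p q, (∀ A, eB p q A * X' - X' * eB p q A = Q A) →
      ∀ V : Cl p q, (X - X') * V = V * (X - X')) := by
  have hpow : ((2 : ℝ) ^ (p + q)) ≠ 0 := by positivity
  refine ⟨⟨((2 : ℝ) ^ (p + q))⁻¹ • ∑ A, eB p q A * X * Ring.inverse (eB p q A), fun V => ?_, ?_⟩,
    fun X' hX' V => ?_⟩
  · rw [smul_mul_assoc, mul_smul_comm, sum_conj_central]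
  · have hQ : ∑ A, Q A * Ring.inverse (eB p q A) =
        ∑ A, eB p q A * X * Ring.inverse (eB p q A) - ((2 : ℝ) ^ (p + q)) • X := by
      have : ((2 : ℝ) ^ (p + q)) • X = ∑ _A : Finset (Fin (p + q)), X := by
        rw [Finset.sum_const, Finset.card_univ, Fintype.card_finset, Fintype.card_fin,
          ← Nat.cast_smul_eq_nsmul ℝ]
        simp
      rw [this, ← Finset.sum_sub_distrib]
      refine Finset.sum_congr rfl fun A _ => ?_
      rw [← hX A, sub_mul, mul_assoc X, Ring.mul_inverse_cancel _ (isUnit_eB p q A), mul_one]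
    rw [hQ, smul_sub, smul_smul, inv_mul_cancel₀ hpow, one_smul]
    abel
  · refine commute_of_commute_gen p q _ (fun b => ?_) V
    have hb : eB p q {b} = gen p q b := by simp [eB]
    have h := (hX {b}).trans (hX' {b}).symm
    rw [hb] at h
    rw [mul_sub, sub_mul, sub_eq_sub_iff_sub_eq_sub]
    exact h
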